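/- arXiv:alg-geom/9609021 — 4 statements merged into one kernel-verified Lean document; each statement's English description precedes it below -/
import Mathlib

section
/- Let n ≥ 1 be a natural number and ψ ∈ ℂ. There exists a vector (x₀, …, x_{n+1}) ∈ ℂ^{n+2}, not all of whose coordinates are zero, satisfying x_j^{n+1} = ψ · ∏_{i ≠ j} x_i for every j ∈ {0, …, n+1}, if and only if ψ^{n+2} = 1. -/
open scoped BigOperators

/-!
Let `N` be the number of coordinates. Multiplying the `j`-th equation by `x j` turns it into
`x j ^ N = ψ * P`, where `P = ∏ i, x i`. Since some coordinate is nonzero, so is `ψ * P`, and hence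
so is `P`; the product of all the equations is `P ^ N = ψ ^ N * P ^ N`, and cancelling `P ^ N` gives
`ψ ^ N = 1`. Conversely, if `ψ ^ N = 1`, then the point `(ψ⁻¹, 1, …, 1)` is a solution, where
`ψ⁻¹ = ψ ^ (N - 1)`.
-/

variable {ι M : Type*} [Fintype ι]

section CommMonoid

variable [CommMonoid M] {n : ℕ} {x : ι → M} {ψ : M}

theorem pow_succ_eq_mul_prod_of_pow_eq_mul_prod_erase [DecidableEq ι] {j : ι}
    (h : x j ^ n = ψ * ∏ i ∈ Finset.univ.erase j, x i) :
    x j ^ (n + 1) = ψ * ∏ i, x i := by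
  rw [pow_succ', h, mul_left_comm, Finset.mul_prod_erase _ _ (Finset.mem_univ j)]

theorem prod_pow_eq_pow_card_mul_prod_pow_card (h : ∀ j, x j ^ n = ψ * ∏ i, x i) :
    (∏ i, x i) ^ n = ψ ^ Fintype.card ι * (∏ i, x i) ^ Fintype.card ι :=
  calc
    (∏ i, x i) ^ n = ∏ j, x j ^ n := (Finset.prod_pow _ _ _).symm
    _ = ∏ _j : ι, ψ * ∏ i, x i := Fintype.prod_congr _ _ h
    _ = (ψ * ∏ i, x i) ^ Fintype.card ι := Finset.prod_const _
    _ = ψ ^ Fintype.card ι * (∏ i, x i) ^ Fintype.card ι := mul_pow _ _ _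

theorem mulSingle_pow_eq_mul_prod_erase [DecidableEq ι] (hψ : ψ ^ (n + 1) = 1) (k j : ι) :
    Pi.mulSingle (M := fun _ => M) k (ψ ^ n) j ^ n =
      ψ * ∏ i ∈ Finset.univ.erase j, Pi.mulSingle (M := fun _ => M) k (ψ ^ n) i := by
  have hinv : ψ ^ n * ψ = 1 := by rwa [← pow_succ]
  rw [Finset.prod_pi_mulSingle']
  rcases eq_or_ne j k with rfl | hjk
  · have hpow : (ψ ^ n) ^ n * ψ ^ n = 1 := by rw [← pow_succ, pow_right_comm, hψ, one_pow]
    simpa using left_inv_eq_right_inv hpow hinv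
  · simpa [hjk, hjk.symm, mul_comm] using hinv.symm

end CommMonoid

section CommMonoidWithZero

variable [CommMonoidWithZero M] {n : ℕ} {x : ι → M} {ψ : M}

theorem prod_ne_zero_of_pow_eq_mul_prod [IsReduced M] (hx : x ≠ 0)
    (h : ∀ j, x j ^ n = ψ * ∏ i, x i) : ∏ i, x i ≠ 0 := by
  obtain ⟨k, hk⟩ := Function.ne_iff.mp hx
  exact right_ne_zero_of_mul (h k ▸ pow_ne_zero n hk)

theorem pow_card_eq_one_of_pow_card_eq_mul_prod [IsCancelMulZero M] (hx : x ≠ 0)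
    (h : ∀ j, x j ^ Fintype.card ι = ψ * ∏ i, x i) : ψ ^ Fintype.card ι = 1 :=
  have hprod : (∏ i, x i) ^ Fintype.card ι ≠ 0 :=
    pow_ne_zero _ (prod_ne_zero_of_pow_eq_mul_prod hx h)
  (mul_eq_right₀ hprod).mp (prod_pow_eq_pow_card_mul_prod_pow_card h).symm

theorem dwork_pencil_singular_iff_general [DecidableEq ι] [IsCancelMulZero M] [Nontrivial M]
    (hn : Fintype.card ι = n + 1) (ψ : M) :
    (∃ x : ι → M, x ≠ 0 ∧ ∀ j, x j ^ n = ψ * ∏ i ∈ Finset.univ.erase j, x i) ↔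
      ψ ^ (n + 1) = 1 := by
  constructor
  · rintro ⟨x, hx, h⟩
    rw [← hn]
    refine pow_card_eq_one_of_pow_card_eq_mul_prod hx fun j => ?_
    rw [hn]
    exact pow_succ_eq_mul_prod_of_pow_eq_mul_prod_erase (h j)
  · intro hψ
    obtain ⟨k⟩ : Nonempty ι := Fintype.card_pos_iff.mp (hn ▸ n.succ_pos)
    have hψn : ψ ^ n ≠ 0 := left_ne_zero_of_mul_eq_one ((pow_succ ψ n).symm.trans hψ)
    refine ⟨Pi.mulSingle k (ψ ^ n), fun h0 => hψn ?_, mulSingle_pow_eq_mul_prod_erase hψ k⟩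
    simpa using congrFun h0 k

end CommMonoidWithZero

/-- The Dwork pencil hypersurface of degree `n+2` in `ℙ^{n+1}` is singular
(i.e., all partial derivatives have a common nonzero zero) iff `ψ^{n+2} = 1`. -/
theorem dwork_pencil_singular_iff (n : ℕ) (hn : 1 ≤ n) (ψ : ℂ) :
    (∃ x : Fin (n + 2) → ℂ, x ≠ 0 ∧
        ∀ j : Fin (n + 2), x j ^ (n + 1) = ψ * ∏ i ∈ Finset.univ.erase j, x i) ↔
      ψ ^ (n + 2) = 1 :=
  dwork_pencil_singular_iff_general (Fintype.card_fin _) ψ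
end

section
/- Let A = ⊕_{d=0}^{m} A_d be a finite-dimensional graded commutative algebra over a field K with A_m ≠ 0 and dim_K A_0 = 1. If ε, ε′ : A → K are two linear functionals, each having graded kernel and nondegenerate associated bilinear form (x,y) ↦ ε(x·y), then dim_K A_m = 1 and ε′ = c·ε for some nonzero scalar c ∈ K. -/
/-!
Products of an element of the top piece `A_m` with elements of positive degree vanish, and
`A_0 = K • 1`, so the ideal generated by `x ∈ A_m` is `K • x`; nondegeneracy therefore makes `ε`
injective on `A_m`, which must be a line. If `ε x = 0`, gradedness of the kernel gives
`ε x_m = 0`, hence `x_m = 0`: the kernel of `ε` lies in the kernel of the projection to `A_m`.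
Kernels of nonzero functionals are maximal subspaces, so the two kernels coincide. Thus the kernel
of `ε` depends on the grading alone, and functionals with the same kernel are proportional.
-/

open Module

theorem finrank_eq_one_of_disjoint_ker {K V : Type*} [DivisionRing K] [AddCommGroup V]
    [Module K V] {f : V →ₗ[K] K} {p : Submodule K V} (hdisj : Disjoint (LinearMap.ker f) p)
    (hp : p ≠ ⊥) : finrank K p = 1 := by
  have hinj : Function.Injective (f.domRestrict p) :=
    LinearMap.injective_domRestrict_iff.2 hdisj.symm
  have : Nontrivial p := Submodule.nontrivial_iff_ne_bot.2 hp
  have hsurj : Function.Surjective (f.domRestrict p) :=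
    LinearMap.surjective (LinearMap.ne_zero_of_injective hinj)
  rw [(LinearEquiv.ofBijective _ ⟨hinj, hsurj⟩).finrank_eq, finrank_self]

theorem exists_ne_zero_eq_smul_of_ker_eq {K V : Type*} [Field K] [AddCommGroup V] [Module K V]
    {f g : V →ₗ[K] K} (h : LinearMap.ker f = LinearMap.ker g) : ∃ c : K, c ≠ 0 ∧ g = c • f := by
  obtain ⟨c, rfl⟩ : ∃ c : K, c • f = g := by
    have hmem := mem_span_of_iInf_ker_le_ker (L := fun _ : Unit => f) (K := g) (by simp [h])
    simpa [Submodule.mem_span_singleton] using hmem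
  rcases eq_or_ne c 0 with rfl | hc
  · have hf : f = 0 := LinearMap.ker_eq_top.1 (by simp [h])
    exact ⟨1, one_ne_zero, by simp [hf]⟩
  · exact ⟨c, hc, rfl⟩

theorem submodule_eq_one_of_finrank_eq_one {K A : Type*} [Field K] [Ring A] [Algebra K A]
    {S : Submodule K A} (hone : 1 ∈ S) (hS : finrank K S = 1) : S = 1 := by
  have : Nontrivial S := nontrivial_of_finrank_pos (hS ▸ one_pos)
  have : Nontrivial A := S.subtype_injective.nontrivial
  rw [Submodule.one_eq_span]
  exact eq_span_singleton_of_mem_of_finrank_eq_one hS hone one_ne_zero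

section Graded

variable {ι : Type*} [DecidableEq ι]

theorem ker_eq_ker_component_of_isHomogeneous {R V N : Type*} [Ring R] [AddCommGroup V]
    [Module R V] [AddCommGroup N] [Module R N] [IsSimpleModule R N] (ℳ : ι → Submodule R V)
    [DirectSum.Decomposition ℳ] {f : V →ₗ[R] N} {i : ι}
    (hf : (LinearMap.ker f).IsHomogeneous ℳ) (hdisj : Disjoint (LinearMap.ker f) (ℳ i))
    (hi : ℳ i ≠ ⊥) :
    LinearMap.ker f = LinearMap.ker (DirectSum.component R ι (fun j => ℳ j) i ∘ₗ
      (DirectSum.decomposeLinearEquiv ℳ).toLinearMap) := by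
  obtain ⟨w, hw, hw0⟩ := Submodule.exists_mem_ne_zero_of_ne_bot hi
  have hf0 : f ≠ 0 := by
    rintro rfl
    exact hw0 (Submodule.disjoint_def.1 hdisj w rfl hw)
  have hmax : IsCoatom (LinearMap.ker f) :=
    LinearMap.isCoatom_ker_of_surjective (LinearMap.surjective_of_ne_zero hf0)
  refine ((hmax.le_iff_eq ?ker_ne_top).1 ?ker_le).symm
  case ker_ne_top =>
    intro htop
    have hcomp : DirectSum.decompose ℳ w i = 0 :=
      LinearMap.congr_fun (LinearMap.ker_eq_top.1 htop) w
    exact hw0 (by rw [← DirectSum.decompose_of_mem_same ℳ hw, hcomp, ZeroMemClass.coe_zero])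
  case ker_le =>
    exact fun x hx => Subtype.ext
      (Submodule.disjoint_def.1 hdisj _ (hf i hx) (SetLike.coe_mem _))

variable [AddMonoid ι]

theorem mul_eq_mul_decompose_zero {R A : Type*} [CommSemiring R] [Semiring A] [Algebra R A]
    (𝒜 : ι → Submodule R A) [GradedAlgebra 𝒜] {m : ι} (htop : ∀ d, d ≠ 0 → 𝒜 (m + d) = ⊥)
    {x : A} (hx : x ∈ 𝒜 m) (y : A) : x * y = x * (DirectSum.decompose 𝒜 y 0 : A) := by
  induction y using DirectSum.Decomposition.inductionOn 𝒜 with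
  | zero => simp
  | add y z hy hz =>
    simp only [mul_add, DirectSum.decompose_add, DirectSum.add_apply, Submodule.coe_add, ← hy, ← hz]
  | @homogeneous d y =>
    rcases eq_or_ne d 0 with rfl | hd
    · rw [DirectSum.decompose_of_mem_same 𝒜 y.2]
    · have hxy : x * (y : A) ∈ 𝒜 (m + d) := SetLike.mul_mem_graded hx y.2
      rw [htop d hd, Submodule.mem_bot] at hxy
      rw [hxy, DirectSum.decompose_of_mem_ne 𝒜 y.2 hd, mul_zero]

variable {K A : Type*} [Field K] [Ring A] [Algebra K A] (𝒜 : ι → Submodule K A) [GradedAlgebra 𝒜]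

/-- A graded expectation function on a graded algebra: a linear functional with graded kernel whose
pairing `(x, y) ↦ ε (x * y)` is nondegenerate. Nondegeneracy is encoded as left separation, which is
equivalent to it when `A` is commutative, the pairing then being symmetric. -/
structure IsGradedExpectation (ε : A →ₗ[K] K) : Prop where
  isHomogeneous_ker : (LinearMap.ker ε).IsHomogeneous 𝒜
  separatingLeft : ((LinearMap.mul K A).compr₂ ε).SeparatingLeft

theorem disjoint_ker_of_separatingLeft {m : ι} (htop : ∀ d, d ≠ 0 → 𝒜 (m + d) = ⊥)
    (h0 : finrank K (𝒜 0) = 1) {ε : A →ₗ[K] K}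
    (hε : ((LinearMap.mul K A).compr₂ ε).SeparatingLeft) :
    Disjoint (LinearMap.ker ε) (𝒜 m) := by
  refine Submodule.disjoint_def.2 fun x hεx hx => hε x fun y => ?_
  have hzero : 𝒜 0 = 1 := submodule_eq_one_of_finrank_eq_one SetLike.GradedOne.one_mem h0
  obtain ⟨c, hc⟩ : ∃ c : K, algebraMap K A c = DirectSum.decompose 𝒜 y 0 :=
    Submodule.mem_one.1 (hzero ▸ SetLike.coe_mem _)
  calc ε (x * y) = ε (c • x) := by
        rw [mul_eq_mul_decompose_zero 𝒜 htop hx, ← hc, ← Algebra.commutes, Algebra.smul_def]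
    _ = 0 := by rw [map_smul, LinearMap.mem_ker.1 hεx, smul_zero]

theorem graded_expectation_unique_up_to_scalar_general {m : ι}
    (htop : ∀ d, d ≠ 0 → 𝒜 (m + d) = ⊥) (hm : 𝒜 m ≠ ⊥) (h0 : finrank K (𝒜 0) = 1)
    {ε ε' : A →ₗ[K] K} (hε : IsGradedExpectation 𝒜 ε)
    (hε' : IsGradedExpectation 𝒜 ε') :
    finrank K (𝒜 m) = 1 ∧ ∃ c : K, c ≠ 0 ∧ ε' = c • ε := by
  have hdisj := disjoint_ker_of_separatingLeft 𝒜 htop h0 hε.separatingLeft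
  have hdisj' := disjoint_ker_of_separatingLeft 𝒜 htop h0 hε'.separatingLeft
  have hker : LinearMap.ker ε = LinearMap.ker ε' :=
    (ker_eq_ker_component_of_isHomogeneous 𝒜 hε.isHomogeneous_ker hdisj hm).trans
      (ker_eq_ker_component_of_isHomogeneous 𝒜 hε'.isHomogeneous_ker hdisj' hm).symm
  exact ⟨finrank_eq_one_of_disjoint_ker hdisj hm, exists_ne_zero_eq_smul_of_ker_eq hker⟩

end Graded

/-- If `A = ⊕_{d=0}^m A_d` is a finite-dimensional graded commutative algebra over a
field with `A_m ≠ 0` and `dim A_0 = 1`, then any two graded expectation functions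
(linear functionals with graded kernel and nondegenerate associated bilinear form)
differ by a nonzero scalar, and `dim A_m = 1`. -/
theorem graded_expectation_unique_up_to_scalar {K A : Type*} [Field K] [CommRing A]
    [Algebra K A] [FiniteDimensional K A]
    (m : ℕ) (𝒜 : ℕ → Submodule K A) [GradedAlgebra 𝒜]
    (hbound : ∀ d : ℕ, m < d → 𝒜 d = ⊥) (htop : 𝒜 m ≠ ⊥)
    (h0 : Module.finrank K (𝒜 0) = 1)
    (ε ε' : A →ₗ[K] K)
    (hgraded : ∀ x : A, ε x = 0 → ∀ d : ℕ, ε (GradedAlgebra.proj 𝒜 d x) = 0)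
    (hnondeg : ∀ x : A, (∀ y : A, ε (x * y) = 0) → x = 0)
    (hgraded' : ∀ x : A, ε' x = 0 → ∀ d : ℕ, ε' (GradedAlgebra.proj 𝒜 d x) = 0)
    (hnondeg' : ∀ x : A, (∀ y : A, ε' (x * y) = 0) → x = 0) :
    Module.finrank K (𝒜 m) = 1 ∧ ∃ c : K, c ≠ 0 ∧ ε' = c • ε :=
  graded_expectation_unique_up_to_scalar_general 𝒜
    (fun _ hd => hbound _ (Nat.lt_add_of_pos_right (Nat.pos_of_ne_zero hd))) htop h0
    ⟨fun d x hx => hgraded x hx d, hnondeg⟩ ⟨fun d x hx => hgraded' x hx d, hnondeg'⟩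
end

section
/- Let V be a finite-dimensional vector space over a field K and let N : V → V be a nilpotent endomorphism, and fix an integer n. Then there exists a unique increasing filtration (W_ℓ)_{ℓ∈ℤ} of V by subspaces, with W_ℓ = 0 for ℓ sufficiently small and W_ℓ = V for ℓ sufficiently large, such that N(W_ℓ) ⊆ W_{ℓ−2} for all ℓ, and such that for every ℓ ≥ 0 the map N^ℓ induces an isomorphism W_{n+ℓ}/W_{n+ℓ−1} ≅ W_{n−ℓ}/W_{n−ℓ−1} between graded pieces. -/
/-!
Every monodromy weight filtration `W` satisfies `ker N ^ k ≤ W (n + k - 1)` and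
`W (n - k) = N ^ k (W (n + k))` for all `k ≥ 0`: the first is injectivity on graded pieces, iterated
downwards from the degrees where `W` is everything; the second is surjectivity, iterated upwards
from the degrees where `W` vanishes. Conversely, these two properties give back bijectivity on
graded pieces. They also give `W (n + k - 1) = N (W (n + k + 1)) + ker N ^ k`, which determines `W`
by descending induction and so proves uniqueness. For existence, the two properties are read off
from the explicit filtration `W ℓ = ∑_{p - q ≤ ℓ - n} ker N ^ (p + 1) ∩ im N ^ q`.
-/

section LinearAlgebra

theorem comap_pow_map_pow_succ {R M : Type*} [Ring R] [AddCommGroup M] [Module R M]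
    (f : Module.End R M) (k : ℕ) (P : Submodule R M) :
    (P.map (f ^ (k + 1))).comap (f ^ k) = P.map f ⊔ LinearMap.ker (f ^ k) := by
  rw [pow_succ, Module.End.mul_eq_comp, Submodule.map_comp, Submodule.comap_map_eq]

variable {R M : Type*} [Semiring R] [AddCommMonoid M] [Module R M]

theorem map_pow_ker_pow_inf_range_pow (f : Module.End R M) (p q k : ℕ) :
    (LinearMap.ker (f ^ (p + k)) ⊓ LinearMap.range (f ^ q)).map (f ^ k) =
      LinearMap.ker (f ^ p) ⊓ LinearMap.range (f ^ (k + q)) := by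
  rw [pow_add, pow_add, Module.End.mul_eq_comp, Module.End.mul_eq_comp, LinearMap.ker_comp,
    LinearMap.range_comp, inf_comm, ← Submodule.map_inf_eq_map_inf_comap, inf_comm]

theorem map_pow_le_of_map_le_sub {ι : Type*} [AddGroup ι] {f : Module.End R M}
    {W : ι → Submodule R M} {c : ι} (h : ∀ i, (W i).map f ≤ W (i - c)) (k : ℕ) (i : ι) :
    (W i).map (f ^ k) ≤ W (i - k • c) := by
  induction k with
  | zero => simp [Module.End.one_eq_id]
  | succ k ih =>
    calc (W i).map (f ^ (k + 1))
        = ((W i).map (f ^ k)).map f := by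
          rw [pow_succ', Module.End.mul_eq_comp, Submodule.map_comp]
      _ ≤ (W (i - k • c)).map f := Submodule.map_mono ih
      _ ≤ W (i - k • c - c) := h _
      _ = W (i - (k + 1) • c) := by rw [succ_nsmul', sub_add_eq_sub_sub_swap]

end LinearAlgebra

/-- `W` is a monodromy weight filtration of `N` centered at `n`. The fields `inf_comap_le` and
`le_map_sup` say that the map `W (n + k) / W (n + k - 1) → W (n - k) / W (n - k - 1)` induced by
`N ^ k` is injective and surjective; that `N ^ k` does induce such a map follows from `map_le`. -/
structure IsMonodromyWeightFiltration {R M : Type*} [Ring R] [AddCommGroup M] [Module R M]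
    (N : Module.End R M) (n : ℤ) (W : ℤ → Submodule R M) : Prop where
  monotone : Monotone W
  exists_eq_bot : ∃ a : ℤ, ∀ ℓ ≤ a, W ℓ = ⊥
  exists_eq_top : ∃ b : ℤ, ∀ ℓ, b ≤ ℓ → W ℓ = ⊤
  map_le (ℓ : ℤ) : (W ℓ).map N ≤ W (ℓ - 2)
  inf_comap_le (k : ℕ) : W (n + k) ⊓ (W (n - k - 1)).comap (N ^ k) ≤ W (n + k - 1)
  le_map_sup (k : ℕ) : W (n - k) ≤ (W (n + k)).map (N ^ k) ⊔ W (n - k - 1)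

namespace IsMonodromyWeightFiltration

variable {R M : Type*} [Ring R] [AddCommGroup M] [Module R M]
  {N : Module.End R M} {n : ℤ} {W W' : ℤ → Submodule R M}

theorem map_pow_le (hW : IsMonodromyWeightFiltration N n W) (k : ℕ) :
    (W (n + k)).map (N ^ k) ≤ W (n - k) := by
  convert map_pow_le_of_map_le_sub hW.map_le k (n + k) using 2
  rw [nsmul_eq_mul]; ring

theorem ker_pow_le (hW : IsMonodromyWeightFiltration N n W) (k : ℕ) :
    LinearMap.ker (N ^ k) ≤ W (n + k - 1) := by
  obtain ⟨b, hb⟩ := hW.exists_eq_top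
  have descend (j : ℕ) (ih : LinearMap.ker (N ^ (j + 1)) ≤ W (n + (j + 1 : ℕ) - 1)) :
      LinearMap.ker (N ^ j) ≤ W (n + j - 1) := by
    refine le_trans (le_inf ?_ ?_) (hW.inf_comap_le j)
    · calc LinearMap.ker (N ^ j)
          ≤ LinearMap.ker (N ^ (j + 1)) := N.iterateKer.monotone j.le_succ
        _ ≤ W (n + (j + 1 : ℕ) - 1) := ih
        _ = W (n + j) := by congr 1; push_cast; ring
    · exact Submodule.comap_mono bot_le
  refine Nat.decreasingInduction (n := k + (b - n + 1).toNat)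
    (motive := fun j _ => LinearMap.ker (N ^ j) ≤ W (n + j - 1)) (fun j _ => descend j) ?_
    (by omega)
  rw [hb _ (by omega)]
  exact le_top

theorem map_pow_eq (hW : IsMonodromyWeightFiltration N n W) (k : ℕ) :
    (W (n + k)).map (N ^ k) = W (n - k) := by
  refine (hW.map_pow_le k).antisymm ?_
  obtain ⟨a, ha⟩ := hW.exists_eq_bot
  have descend (j : ℕ) (ih : W (n - (j + 1 : ℕ)) ≤ (W (n + (j + 1 : ℕ))).map (N ^ (j + 1))) :
      W (n - j) ≤ (W (n + j)).map (N ^ j) := by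
    refine (hW.le_map_sup j).trans (sup_le le_rfl ?_)
    calc W (n - j - 1)
        = W (n - (j + 1 : ℕ)) := by congr 1; push_cast; ring
      _ ≤ (W (n + (j + 1 : ℕ))).map (N ^ (j + 1)) := ih
      _ = ((W (n + (j + 1 : ℕ))).map N).map (N ^ j) := by
        rw [pow_succ, Module.End.mul_eq_comp, Submodule.map_comp]
      _ ≤ (W (n + j)).map (N ^ j) :=
        Submodule.map_mono ((hW.map_le _).trans (hW.monotone (by omega)))
  refine Nat.decreasingInduction (n := k + (n - a).toNat)
    (motive := fun j _ => W (n - j) ≤ (W (n + j)).map (N ^ j)) (fun j _ => descend j) ?_ (by omega)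
  rw [ha _ (by omega)]
  exact bot_le

theorem eq_map_sup_ker_pow (hW : IsMonodromyWeightFiltration N n W) (k : ℕ) :
    W (n + k - 1) = (W (n + k + 1)).map N ⊔ LinearMap.ker (N ^ k) := by
  apply le_antisymm
  · have hpow : (W (n + k - 1)).map (N ^ k) ≤ W (n - (k + 1 : ℕ)) := by
      convert map_pow_le_of_map_le_sub hW.map_le k (n + k - 1) using 2
      rw [nsmul_eq_mul]; push_cast; ring
    rw [← hW.map_pow_eq, Submodule.map_le_iff_le_comap, comap_pow_map_pow_succ] at hpow
    simpa only [Nat.cast_succ, add_assoc] using hpow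
  · refine sup_le ((hW.map_le _).trans_eq ?_) (hW.ker_pow_le k)
    congr 1; ring

theorem apply_add_natCast_eq (hW : IsMonodromyWeightFiltration N n W)
    (hW' : IsMonodromyWeightFiltration N n W') (k : ℕ) : W (n + k) = W' (n + k) := by
  obtain ⟨b, hb⟩ := hW.exists_eq_top
  obtain ⟨b', hb'⟩ := hW'.exists_eq_top
  have descend (j : ℕ) (ih : ∀ ℓ ≥ n + (j + 1 : ℕ), W ℓ = W' ℓ) :
      ∀ ℓ ≥ n + (j : ℤ), W ℓ = W' ℓ := by
    intro ℓ hℓ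
    obtain rfl | hlt := hℓ.eq_or_lt
    · have hstep : W (n + (j + 1 : ℕ) - 1) = W' (n + (j + 1 : ℕ) - 1) := by
        rw [hW.eq_map_sup_ker_pow, hW'.eq_map_sup_ker_pow, ih (n + (j + 1 : ℕ) + 1) (by omega)]
      convert hstep using 2 <;> push_cast <;> ring
    · exact ih ℓ (by omega)
  refine Nat.decreasingInduction (n := k + (max b b' - n).toNat)
    (motive := fun j _ => ∀ ℓ ≥ n + (j : ℤ), W ℓ = W' ℓ) (fun j _ => descend j) ?_ (by omega)
    (n + k) le_rfl
  intro ℓ hℓ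
  rw [hb ℓ (by omega), hb' ℓ (by omega)]

theorem unique (hW : IsMonodromyWeightFiltration N n W)
    (hW' : IsMonodromyWeightFiltration N n W') : W = W' := by
  funext ℓ
  obtain ⟨k, hk | hk⟩ := (ℓ - n).eq_nat_or_neg
  · obtain rfl : ℓ = n + k := by omega
    exact hW.apply_add_natCast_eq hW' k
  · obtain rfl : ℓ = n - k := by omega
    rw [← hW.map_pow_eq, ← hW'.map_pow_eq, hW.apply_add_natCast_eq hW']

theorem of_ker_pow_le_of_le_map_pow (monotone : Monotone W)
    (exists_eq_bot : ∃ a : ℤ, ∀ ℓ ≤ a, W ℓ = ⊥) (exists_eq_top : ∃ b : ℤ, ∀ ℓ, b ≤ ℓ → W ℓ = ⊤)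
    (map_le : ∀ ℓ, (W ℓ).map N ≤ W (ℓ - 2))
    (ker_pow_le : ∀ k : ℕ, LinearMap.ker (N ^ k) ≤ W (n + k - 1))
    (le_map_pow : ∀ k : ℕ, W (n - k) ≤ (W (n + k)).map (N ^ k)) :
    IsMonodromyWeightFiltration N n W where
  monotone := monotone
  exists_eq_bot := exists_eq_bot
  exists_eq_top := exists_eq_top
  map_le := map_le
  inf_comap_le k :=
    calc W (n + k) ⊓ (W (n - k - 1)).comap (N ^ k)
        ≤ (W (n - (k + 1 : ℕ))).comap (N ^ k) :=
          inf_le_right.trans_eq (by congr 2; push_cast; ring)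
      _ ≤ ((W (n + (k + 1 : ℕ))).map (N ^ (k + 1))).comap (N ^ k) :=
          Submodule.comap_mono (le_map_pow (k + 1))
      _ = (W (n + (k + 1 : ℕ))).map N ⊔ LinearMap.ker (N ^ k) := comap_pow_map_pow_succ N k _
      _ ≤ W (n + k - 1) :=
          sup_le ((map_le _).trans_eq (by congr 1; push_cast; ring)) (ker_pow_le k)
  le_map_sup k := (le_map_pow k).trans le_sup_left

end IsMonodromyWeightFiltration

theorem isMonodromyWeightFiltration_iff {R M : Type*} [Ring R] [AddCommGroup M] [Module R M]
    {N : Module.End R M} {n : ℤ} {W : ℤ → Submodule R M} :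
    IsMonodromyWeightFiltration N n W ↔
      Monotone W ∧
      (∃ a : ℤ, ∀ ℓ : ℤ, ℓ ≤ a → W ℓ = ⊥) ∧
      (∃ b : ℤ, ∀ ℓ : ℤ, b ≤ ℓ → W ℓ = ⊤) ∧
      (∀ ℓ : ℤ, (W ℓ).map N ≤ W (ℓ - 2)) ∧
      (∀ ℓ : ℕ,
        (∀ x ∈ W (n + ℓ), (N ^ ℓ) x ∈ W (n - ℓ)) ∧
        (∀ x ∈ W (n + ℓ), (N ^ ℓ) x ∈ W (n - ℓ - 1) → x ∈ W (n + ℓ - 1)) ∧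
        (∀ y ∈ W (n - ℓ), ∃ x ∈ W (n + ℓ), (N ^ ℓ) x - y ∈ W (n - ℓ - 1))) := by
  constructor
  · intro hW
    refine ⟨hW.monotone, hW.exists_eq_bot, hW.exists_eq_top, hW.map_le, fun k =>
      ⟨fun x hx => hW.map_pow_le k (Submodule.mem_map_of_mem hx),
        fun x hx hNx => hW.inf_comap_le k ⟨hx, hNx⟩, fun y hy => ?_⟩⟩
    rw [← hW.map_pow_eq] at hy
    obtain ⟨x, hx, rfl⟩ := hy
    exact ⟨x, hx, by simp⟩
  · rintro ⟨hmono, hbot, htop, hmap, hgr⟩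
    refine ⟨hmono, hbot, htop, hmap, fun k x hx => (hgr k).2.1 x hx.1 hx.2, fun k y hy => ?_⟩
    obtain ⟨x, hx, hxy⟩ := (hgr k).2.2 y hy
    rw [← sub_sub_cancel ((N ^ k) x) y]
    exact Submodule.sub_mem _ (Submodule.mem_sup_left (Submodule.mem_map_of_mem hx))
      (Submodule.mem_sup_right hxy)

/-- The explicit model `∑_{p - q ≤ ℓ - n} ker N ^ (p + 1) ∩ im N ^ q` of the `ℓ`-th step of the
monodromy weight filtration of `N` centered at `n`: on a Jordan block, a vector in the image of
`N ^ q` killed by `N ^ (p + 1)` has weight at most `n + p - q`. -/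
def monodromyWeightFiltration {R M : Type*} [Semiring R] [AddCommMonoid M] [Module R M]
    (N : Module.End R M) (n ℓ : ℤ) : Submodule R M :=
  ⨆ (p : ℕ) (q : ℕ) (_ : p + n ≤ q + ℓ), LinearMap.ker (N ^ (p + 1)) ⊓ LinearMap.range (N ^ q)

namespace monodromyWeightFiltration

section Semiring

variable {R M : Type*} [Semiring R] [AddCommMonoid M] [Module R M] {N : Module.End R M} {n : ℤ}

theorem le_iff {ℓ : ℤ} {P : Submodule R M} :
    monodromyWeightFiltration N n ℓ ≤ P ↔ ∀ p q : ℕ, p + n ≤ q + ℓ →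
      LinearMap.ker (N ^ (p + 1)) ⊓ LinearMap.range (N ^ q) ≤ P := by
  simp only [monodromyWeightFiltration, iSup_le_iff]

theorem ker_pow_inf_range_pow_le {ℓ : ℤ} {p q : ℕ} (h : p + n ≤ q + ℓ) :
    LinearMap.ker (N ^ (p + 1)) ⊓ LinearMap.range (N ^ q) ≤ monodromyWeightFiltration N n ℓ :=
  le_iff.1 le_rfl p q h

variable (N n)

theorem monotone : Monotone (monodromyWeightFiltration N n) := fun _ _ hℓ =>
  le_iff.2 fun _ _ h => ker_pow_inf_range_pow_le (by omega)

theorem map_le (ℓ : ℤ) :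
    (monodromyWeightFiltration N n ℓ).map N ≤ monodromyWeightFiltration N n (ℓ - 2) := by
  rw [Submodule.map_le_iff_le_comap, le_iff]
  intro p q h
  have hmap : (LinearMap.ker (N ^ (p + 1)) ⊓ LinearMap.range (N ^ q)).map N =
      LinearMap.ker (N ^ p) ⊓ LinearMap.range (N ^ (1 + q)) := by
    simpa only [pow_one] using map_pow_ker_pow_inf_range_pow N p q 1
  rw [← Submodule.map_le_iff_le_comap, hmap]
  cases p with
  | zero => simp [Module.End.one_eq_id]
  | succ p => exact ker_pow_inf_range_pow_le (by push_cast at h ⊢; omega)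

theorem ker_pow_le (k : ℕ) :
    LinearMap.ker (N ^ k) ≤ monodromyWeightFiltration N n (n + k - 1) := by
  cases k with
  | zero => simp [Module.End.one_eq_id]
  | succ k =>
    calc LinearMap.ker (N ^ (k + 1))
        = LinearMap.ker (N ^ (k + 1)) ⊓ LinearMap.range (N ^ 0) := by simp [Module.End.one_eq_id]
      _ ≤ monodromyWeightFiltration N n (n + (k + 1 : ℕ) - 1) :=
        ker_pow_inf_range_pow_le (by push_cast; omega)

theorem le_map_pow (k : ℕ) :
    monodromyWeightFiltration N n (n - k) ≤
      (monodromyWeightFiltration N n (n + k)).map (N ^ k) := by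
  refine le_iff.2 fun p q h => ?_
  obtain ⟨r, rfl⟩ := Nat.exists_eq_add_of_le (show k ≤ q by omega)
  rw [← map_pow_ker_pow_inf_range_pow, add_right_comm]
  exact Submodule.map_mono (ker_pow_inf_range_pow_le (by push_cast at h ⊢; omega))

end Semiring

theorem isMonodromyWeightFiltration {R M : Type*} [Ring R] [AddCommGroup M] [Module R M]
    {N : Module.End R M} (hN : IsNilpotent N) (n : ℤ) :
    IsMonodromyWeightFiltration N n (monodromyWeightFiltration N n) := by
  obtain ⟨d, hd⟩ := hN
  refine .of_ker_pow_le_of_le_map_pow (monotone N n) ⟨n - d, fun ℓ hℓ => ?_⟩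
    ⟨n + d - 1, fun ℓ hℓ => ?_⟩ (map_le N n) (ker_pow_le N n) (le_map_pow N n)
  · refine eq_bot_iff.2 (le_iff.2 fun p q h => inf_le_right.trans ?_)
    simp [pow_eq_zero_of_le (show d ≤ q by omega) hd]
  · refine eq_top_iff.2 (le_trans ?_ (monotone N n hℓ))
    simpa [hd] using ker_pow_le N n d

end monodromyWeightFiltration

theorem monodromy_weight_filtration_general {R M : Type*} [Ring R] [AddCommGroup M] [Module R M]
    (N : Module.End R M) (hN : IsNilpotent N) (n : ℤ) :
    ∃! W : ℤ → Submodule R M, IsMonodromyWeightFiltration N n W :=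
  ⟨monodromyWeightFiltration N n, monodromyWeightFiltration.isMonodromyWeightFiltration hN n,
    fun _ hW => hW.unique (monodromyWeightFiltration.isMonodromyWeightFiltration hN n)⟩

/-- Existence and uniqueness of the monodromy weight filtration centered at `n`
associated to a nilpotent endomorphism `N` of a finite-dimensional vector space:
an increasing exhaustive filtration `W` with `N(W_ℓ) ⊆ W_{ℓ-2}` such that for each
`ℓ ≥ 0` the map `N^ℓ` induces an isomorphism
`W_{n+ℓ}/W_{n+ℓ-1} ≅ W_{n-ℓ}/W_{n-ℓ-1}`. -/
theorem monodromy_weight_filtration {K V : Type*} [Field K] [AddCommGroup V]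
    [Module K V] [FiniteDimensional K V]
    (N : Module.End K V) (hN : IsNilpotent N) (n : ℤ) :
    ∃! W : ℤ → Submodule K V,
      Monotone W ∧
      (∃ a : ℤ, ∀ ℓ : ℤ, ℓ ≤ a → W ℓ = ⊥) ∧
      (∃ b : ℤ, ∀ ℓ : ℤ, b ≤ ℓ → W ℓ = ⊤) ∧
      (∀ ℓ : ℤ, (W ℓ).map N ≤ W (ℓ - 2)) ∧
      (∀ ℓ : ℕ,
        (∀ x ∈ W (n + ℓ), (N ^ ℓ) x ∈ W (n - ℓ)) ∧
        (∀ x ∈ W (n + ℓ), (N ^ ℓ) x ∈ W (n - ℓ - 1) → x ∈ W (n + ℓ - 1)) ∧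
        (∀ y ∈ W (n - ℓ), ∃ x ∈ W (n + ℓ), (N ^ ℓ) x - y ∈ W (n - ℓ - 1))) := by
  simpa only [isMonodromyWeightFiltration_iff] using
    monodromy_weight_filtration_general N hN n
end

section
/- There exist infinitely many two-dimensional complex linear subspaces L ⊆ ℂ⁵ such that every point (x₀, x₁, x₂, x₃, x₄) ∈ L satisfies x₀⁵ + x₁⁵ + x₂⁵ + x₃⁵ + x₄⁵ = 0. In fact, for every (a, b, c) ∈ ℂ³ with a⁵ + b⁵ + c⁵ = 0 and (a,b,c) ≠ 0, the subspace L_{a,b,c} := {(u, −u, av, bv, cv) : u, v ∈ ℂ} is such a subspace, and distinct projective points [a : b : c] give distinct subspaces. -/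
open scoped BigOperators

/-!
For odd `d` the point `[1 : -1 : 0 : ⋯ : 0]` lies on the Fermat hypersurface of degree `d`, and
so does every line joining it to a point `[0 : 0 : w]` with `w` on the Fermat hypersurface in two
fewer variables, since `uᵈ + (-u)ᵈ = 0`. The plane over such a line determines the span of `w` as
its intersection with `x₀ = x₁ = 0`. Over an algebraically closed field, solving for `r` in
`1 + sᵈ + rᵈ = 0` for each `s` produces infinitely many points `w = [1 : s : r : 0 : ⋯ : 0]`.
-/

section

open Matrix (vecCons)
open Submodule (span)

variable {K : Type*} [Field K] {n d : ℕ}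

variable (K n d) in
/-- The lines on the Fermat hypersurface `∑ xᵢᵈ = 0` in `ℙⁿ⁻¹(K)`, encoded as the two-dimensional
subspaces of `Kⁿ` contained in its affine cone. -/
def fermatLines : Set (Submodule K (Fin n → K)) :=
  {L | Module.finrank K L = 2 ∧ ∀ x ∈ L, ∑ i, x i ^ d = 0}

/-- The subspace of `Kⁿ⁺²` over the line joining the vertex `[1 : -1 : 0 : ⋯ : 0]` to the point
`[0 : 0 : w]`. As `w` varies over the Fermat hypersurface in `n` variables, these lines sweep out
a cone. For `w = 0` the subspace degenerates to the line over the vertex. -/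
def coneLine (w : Fin n → K) : Submodule K (Fin (n + 2) → K) :=
  span K {vecCons 1 (vecCons (-1) 0), vecCons 0 (vecCons 0 w)}

lemma mem_coneLine {w : Fin n → K} {x : Fin (n + 2) → K} :
    x ∈ coneLine w ↔ ∃ u v : K, x = vecCons u (vecCons (-u) (v • w)) := by
  simp [coneLine, Submodule.mem_span_pair, eq_comm]

lemma vecCons_zero_zero_mem_coneLine {w y : Fin n → K} :
    vecCons 0 (vecCons 0 y) ∈ coneLine w ↔ y ∈ span K {w} := by
  simp [mem_coneLine, Submodule.mem_span_singleton, eq_comm]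

lemma finrank_coneLine {w : Fin n → K} (hw : w ≠ 0) : Module.finrank K (coneLine w) = 2 := by
  have hli : LinearIndependent K ![vecCons 1 (vecCons (-1) 0), vecCons 0 (vecCons 0 w)] := by
    rw [LinearIndependent.pair_iff]
    intro u v huv
    have h : u = 0 ∧ v • w = 0 := by simpa using huv
    exact ⟨h.1, (smul_eq_zero_iff_left hw).mp h.2⟩
  rw [coneLine, ← Matrix.range_cons_cons_empty _ _ ![], finrank_span_eq_card hli, Fintype.card_fin]

lemma sum_pow_eq_zero_of_mem_coneLine (hd : Odd d) {w : Fin n → K} (hw : ∑ i, w i ^ d = 0)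
    {x : Fin (n + 2) → K} (hx : x ∈ coneLine w) : ∑ i, x i ^ d = 0 := by
  obtain ⟨u, v, rfl⟩ := mem_coneLine.mp hx
  calc ∑ i, vecCons u (vecCons (-u) (v • w)) i ^ d
      = u ^ d + ((-u) ^ d + ∑ i, (v * w i) ^ d) := by simp [Fin.sum_univ_succ]
    _ = v ^ d * ∑ i, w i ^ d := by simp [hd.neg_pow, mul_pow, Finset.mul_sum]
    _ = 0 := by rw [hw, mul_zero]

lemma coneLine_mem_fermatLines (hd : Odd d) {w : Fin n → K} (hw₀ : w ≠ 0)
    (hw : ∑ i, w i ^ d = 0) : coneLine w ∈ fermatLines K (n + 2) d :=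
  ⟨finrank_coneLine hw₀, fun _ ↦ sum_pow_eq_zero_of_mem_coneLine hd hw⟩

lemma exists_eq_smul_of_coneLine_eq {w w' : Fin n → K} (h : coneLine w = coneLine w') :
    ∃ t : K, t ≠ 0 ∧ w' = t • w := by
  have hspan : span K {w} = span K {w'} := by
    ext y
    rw [← vecCons_zero_zero_mem_coneLine, h, vecCons_zero_zero_mem_coneLine]
  obtain ⟨t, rfl⟩ := Submodule.span_singleton_eq_span_singleton.mp hspan
  exact ⟨t, t.ne_zero, rfl⟩

lemma coneLine_vecCons_one_injective :
    Function.Injective fun w : Fin n → K ↦ coneLine (vecCons 1 w) := by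
  intro w w' h
  obtain ⟨t, -, ht⟩ := exists_eq_smul_of_coneLine_eq h
  obtain ⟨rfl, rfl⟩ : 1 = t ∧ w' = t • w := by simpa using ht
  exact (one_smul K w).symm

lemma infinite_fermatLines [IsAlgClosed K] (hd : Odd d) (hn : 5 ≤ n) :
    (fermatLines K n d).Infinite := by
  obtain ⟨m, rfl⟩ := Nat.exists_eq_add_of_le' hn
  have hroot (s : K) : ∃ r : K, r ^ d = -(1 + s ^ d) := IsAlgClosed.exists_pow_nat_eq _ hd.pos
  choose r hr using hroot
  let tail (s : K) : Fin (m + 2) → K := vecCons s (vecCons (r s) 0)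
  have htail : Function.Injective tail := fun s s' h ↦ congrFun h 0
  have hsum (s : K) : ∑ i, vecCons 1 (tail s) i ^ d = 0 := by
    simp [tail, Fin.sum_univ_succ, hr, hd.pos.ne']
  exact Set.infinite_of_injective_forall_mem (coneLine_vecCons_one_injective.comp htail)
    fun s ↦ coneLine_mem_fermatLines hd (by simp) (hsum s)

lemma coe_coneLine_vec3 (a b c : K) :
    (coneLine ![a, b, c] : Set (Fin 5 → K)) =
      {x | ∃ u v : K, x = ![u, -u, a * v, b * v, c * v]} := by
  ext x
  simp [mem_coneLine, mul_comm]

end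

theorem fermat_quintic_infinitely_many_lines_general {K : Type*} [Field K] [IsAlgClosed K]
    {n d : ℕ} (hd : Odd d) (hn : 3 ≤ n) :
    (fermatLines K (n + 2) d).Infinite ∧
    (∀ w : Fin n → K, w ≠ 0 → ∑ i, w i ^ d = 0 → coneLine w ∈ fermatLines K (n + 2) d) ∧
    (∀ w w' : Fin n → K, coneLine w = coneLine w' → ∃ t : K, t ≠ 0 ∧ w' = t • w) :=
  ⟨infinite_fermatLines hd (by lia), fun _ ↦ coneLine_mem_fermatLines hd,
    fun _ _ ↦ exists_eq_smul_of_coneLine_eq⟩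

/-- There are infinitely many two-dimensional complex linear subspaces of `ℂ⁵` contained
in the affine cone over the Fermat quintic threefold.  For every `(a,b,c) ≠ 0` with
`a⁵ + b⁵ + c⁵ = 0`, the set `L_{a,b,c} = {(u, -u, av, bv, cv)}` is such a subspace, and
distinct projective points `[a:b:c]` give distinct subspaces. -/
theorem fermat_quintic_infinitely_many_lines :
    {L : Submodule ℂ (Fin 5 → ℂ) |
        Module.finrank ℂ L = 2 ∧ ∀ x ∈ L, ∑ i : Fin 5, x i ^ 5 = 0}.Infinite ∧
    (∀ a b c : ℂ, a ^ 5 + b ^ 5 + c ^ 5 = 0 → (a, b, c) ≠ (0, 0, 0) →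
      ∃ L : Submodule ℂ (Fin 5 → ℂ),
        (L : Set (Fin 5 → ℂ)) = {x | ∃ u v : ℂ, x = ![u, -u, a * v, b * v, c * v]} ∧
        Module.finrank ℂ L = 2 ∧
        ∀ x ∈ L, ∑ i : Fin 5, x i ^ 5 = 0) ∧
    (∀ a b c a' b' c' : ℂ,
      a ^ 5 + b ^ 5 + c ^ 5 = 0 → (a, b, c) ≠ (0, 0, 0) →
      a' ^ 5 + b' ^ 5 + c' ^ 5 = 0 → (a', b', c') ≠ (0, 0, 0) →
      {x : Fin 5 → ℂ | ∃ u v : ℂ, x = ![u, -u, a * v, b * v, c * v]} =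
        {x : Fin 5 → ℂ | ∃ u v : ℂ, x = ![u, -u, a' * v, b' * v, c' * v]} →
      ∃ t : ℂ, t ≠ 0 ∧ a' = t * a ∧ b' = t * b ∧ c' = t * c) := by
  obtain ⟨hinf, hmem, hscale⟩ :=
    fermat_quintic_infinitely_many_lines_general (K := ℂ) (n := 3) (d := 5) (by decide) le_rfl
  refine ⟨hinf, fun a b c h h₀ ↦ ⟨coneLine ![a, b, c], coe_coneLine_vec3 a b c,
    hmem _ (by simpa using h₀) (by simpa [Fin.sum_univ_three] using h)⟩,
    fun a b c a' b' c' _ _ _ _ hset ↦ ?_⟩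
  rw [← coe_coneLine_vec3, ← coe_coneLine_vec3, SetLike.coe_set_eq] at hset
  simpa using hscale _ _ hset
end
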